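/- arXiv:2405.10894 — 9 statements merged into one kernel-verified Lean document; each statement's English description precedes it below -/
import Mathlib

section
/- Let k ≥ 1 be a natural number and let C be a class of finite simple graphs that is (k+1)-well-quasi-ordered by the labelled induced-subgraph relation. Then the hereditary closure of C (the class of all induced subgraphs of members of C) is k-well-quasi-ordered by the labelled induced-subgraph relation. -/
/-- A finite simple undirected graph, with vertex set `Fin n`. -/
structure FinGraph where
  n : ℕ
  adj : Fin n → Fin n → Prop
  symm : ∀ u v, adj u v → adj v u
  irrefl : ∀ u, ¬ adj u u

/-- A label-preserving induced-subgraph embedding between two `X`-labelled graphs,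
where labels are related by `le`: an injective map on vertices such that
`{h u, h v}` is an edge of `H` iff `{u,v}` is an edge of `G`, and labels are related. -/
def FinGraph.LEmb {X : Type} (le : X → X → Prop) (G H : FinGraph)
    (lG : Fin G.n → X) (lH : Fin H.n → X) : Prop :=
  ∃ h : Fin G.n → Fin H.n, Function.Injective h ∧
    (∀ u v, H.adj (h u) (h v) ↔ G.adj u v) ∧ (∀ u, le (lG u) (lH (h u)))

/-- A class `C` of graphs is `k`-well-quasi-ordered if for every set `X` with at most
`k` elements (ordered by equality), every infinite sequence of `X`-labelled graphs with
underlying graph in `C` contains `i < j` with a label-preserving embedding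
of the `i`-th into the `j`-th. -/
def FinGraph.kWQO (C : Set FinGraph) (k : ℕ) : Prop :=
  ∀ (X : Type) (_ : Fintype X), Fintype.card X ≤ k →
    ∀ (G : ℕ → FinGraph), (∀ i, G i ∈ C) →
      ∀ l : (i : ℕ) → Fin (G i).n → X,
        ∃ i j, i < j ∧ FinGraph.LEmb (· = ·) (G i) (G j) (l i) (l j)

/-- The hereditary closure of a class `C`: all induced subgraphs of members of `C`. -/
def FinGraph.hereditaryClosure (C : Set FinGraph) : Set FinGraph :=
  {G | ∃ H ∈ C, ∃ h : Fin G.n → Fin H.n, Function.Injective h ∧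
    ∀ u v, H.adj (h u) (h v) ↔ G.adj u v}

/-- Hereditary Closure Lemma: let `k ≥ 1` and let `C` be a class of finite simple
graphs that is `(k+1)`-well-quasi-ordered by the labelled induced-subgraph relation.
Then the hereditary closure of `C` is `k`-well-quasi-ordered. -/
theorem stmt0 (C : Set FinGraph) (k : ℕ) (hk : 1 ≤ k)
    (h : FinGraph.kWQO C (k + 1)) :
    FinGraph.kWQO (FinGraph.hereditaryClosure C) k := by
  intro X _ hX G hG l
  choose H hH e he hadj using hG
  obtain ⟨i, j, hij, f, hf, hfadj, hfl⟩ := h (Option X) inferInstance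
    (by rw [Fintype.card_option]; omega) H hH
    (fun i => Function.extend (e i) (fun u => some (l i u)) (fun _ => none))
  have key : ∀ u, ∃ w, e j w = f (e i u) ∧ l j w = l i u := by
    intro u
    have h1 := hfl (e i u)
    simp only [(he i).extend_apply] at h1
    by_cases hw : ∃ w, e j w = f (e i u)
    · obtain ⟨w, hw⟩ := hw
      rw [← hw, (he j).extend_apply] at h1
      exact ⟨w, hw, (Option.some.inj h1).symm⟩
    · rw [Function.extend_apply' _ _ _ hw] at h1
      cases h1
  choose g hg hgl using key
  refine ⟨i, j, hij, g, ?_, ?_, fun u => (hgl u).symm⟩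
  · intro u v huv
    apply he i
    apply hf
    rw [← hg, ← hg, huv]
  · intro u v
    rw [← hadj j, hg, hg, hfadj, hadj i]
end

section
/- Let M be a finite monoid. The following are equivalent: (1) the relation defined by x ≤ y iff xM ⊆ (xy)M is total on M (for all x,y, x ≤ y or y ≤ x); (2) the relation defined by x ≤ y iff Mx ⊆ M(yx) is total on M; (3) the relation defined by x ≤ y iff MxM = M(xy)M = M(yx)M is total on M; (4) the bilateral ideals of M are totally ordered by inclusion and M(xy)M = MxM ∩ MyM for all x,y ∈ M. -/
/-- The right ideal `mM = {m·y : y ∈ M}` of an element `m` of a monoid `M`. -/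
def rIdeal (M : Type) [Monoid M] (m : M) : Set M := {z | ∃ y : M, z = m * y}

/-- The left ideal `Mm = {x·m : x ∈ M}` of an element `m` of a monoid `M`. -/
def lIdeal (M : Type) [Monoid M] (m : M) : Set M := {z | ∃ x : M, z = x * m}

/-- The bilateral ideal `MmM = {x·m·y : x,y ∈ M}` of an element `m` of a monoid `M`. -/
def bIdeal (M : Type) [Monoid M] (m : M) : Set M := {z | ∃ x y : M, z = x * m * y}

theorem bI_sub (M : Type) [Monoid M] {x z : M} :
    bIdeal M x ⊆ bIdeal M z ↔ ∃ a b : M, x = a * z * b := by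
  constructor
  · intro h
    exact h ⟨1, 1, by simp⟩
  · rintro ⟨a, b, rfl⟩ w ⟨c, d, rfl⟩
    exact ⟨c * a, b * d, by simp only [mul_assoc]⟩

theorem rI_sub (M : Type) [Monoid M] {x z : M} :
    rIdeal M x ⊆ rIdeal M z ↔ ∃ b : M, x = z * b := by
  constructor
  · intro h
    exact h ⟨1, by simp⟩
  · rintro ⟨b, rfl⟩ w ⟨d, rfl⟩
    exact ⟨b * d, by simp only [mul_assoc]⟩

theorem lI_sub (M : Type) [Monoid M] {x z : M} :
    lIdeal M x ⊆ lIdeal M z ↔ ∃ a : M, x = a * z := by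
  constructor
  · intro h
    exact h ⟨1, by simp⟩
  · rintro ⟨b, rfl⟩ w ⟨d, rfl⟩
    exact ⟨d * b, by simp only [mul_assoc]⟩

/-- Some positive power of an element of a finite monoid is idempotent. -/
theorem idem_pow (M : Type) [Monoid M] [Fintype M] (c : M) :
    ∃ n : ℕ, c ^ (n + 1) * c ^ (n + 1) = c ^ (n + 1) := by
  obtain ⟨i, j, hne, hij⟩ := Finite.exists_ne_map_eq_of_infinite (fun n : ℕ => c ^ n)
  wlog hlt : i < j generalizing i j
  · exact this j i hne.symm hij.symm (by omega)
  obtain ⟨p, rfl⟩ : ∃ p, j = i + (p + 1) := ⟨j - i - 1, by omega⟩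
  have key : ∀ k m : ℕ, c ^ (i + m + k * (p + 1)) = c ^ (i + m) := by
    intro k m
    induction k with
    | zero => simp
    | succ k ih =>
      have : i + m + (k + 1) * (p + 1) = (i + (p + 1)) + (m + k * (p + 1)) := by ring
      rw [this, pow_add, ← hij, ← pow_add, ← add_assoc, ih]
  refine ⟨i * (p + 1) + p, ?_⟩
  have h := key (i + 1) (i * p + p + 1)
  rw [← pow_add]
  convert h using 2 <;> ring

theorem iter_sandwich (M : Type) [Monoid M] {a x c : M} (h : x = a * x * c) (n : ℕ) :
    x = a ^ n * x * c ^ n := by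
  induction n with
  | zero => simp
  | succ n ih =>
    calc x = a ^ n * x * c ^ n := ih
      _ = a ^ n * (a * x * c) * c ^ n := by rw [← h]
      _ = _ := by rw [pow_succ, pow_succ']; simp only [mul_assoc]

theorem stabR (M : Type) [Monoid M] [Fintype M] {x y : M}
    (h : bIdeal M x ⊆ bIdeal M (x * y)) : rIdeal M x ⊆ rIdeal M (x * y) := by
  obtain ⟨a, b, hab⟩ := (bI_sub M).1 h
  obtain ⟨n, hn⟩ := idem_pow M (y * b)
  have h1 := iter_sandwich M (a := a) (x := x) (c := y * b)
    (by simpa only [mul_assoc] using hab) (n + 1)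
  have h2 : x = x * (y * b) ^ (n + 1) := by
    conv_lhs => rw [h1, ← hn, ← mul_assoc, ← h1]
  refine (rI_sub M).2 ⟨b * (y * b) ^ n, ?_⟩
  rw [pow_succ'] at h2
  simpa only [mul_assoc] using h2

theorem stabL (M : Type) [Monoid M] [Fintype M] {x y : M}
    (h : bIdeal M x ⊆ bIdeal M (y * x)) : lIdeal M x ⊆ lIdeal M (y * x) := by
  obtain ⟨a, b, hab⟩ := (bI_sub M).1 h
  obtain ⟨n, hn⟩ := idem_pow M (a * y)
  have h1 := iter_sandwich M (a := a * y) (x := x) (c := b)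
    (by simpa only [mul_assoc] using hab) (n + 1)
  have h2 : x = (a * y) ^ (n + 1) * x := by
    conv_lhs => rw [h1, ← hn, mul_assoc, mul_assoc, ← mul_assoc _ x, ← h1]
  refine (lI_sub M).2 ⟨(a * y) ^ n * a, ?_⟩
  rw [pow_succ] at h2
  simpa only [mul_assoc] using h2

theorem bI_mul_left (M : Type) [Monoid M] (x y : M) : bIdeal M (x * y) ⊆ bIdeal M x :=
  (bI_sub M).2 ⟨1, y, by simp⟩

theorem bI_mul_right (M : Type) [Monoid M] (x y : M) : bIdeal M (x * y) ⊆ bIdeal M y :=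
  (bI_sub M).2 ⟨x, 1, by simp⟩

theorem three_of (M : Type) [Monoid M]
    (h : ∀ x y : M, (bIdeal M x ⊆ bIdeal M (x * y) ∨ bIdeal M x ⊆ bIdeal M (y * x)) ∨
      (bIdeal M y ⊆ bIdeal M (y * x) ∨ bIdeal M y ⊆ bIdeal M (x * y))) (x y : M) :
    (bIdeal M x = bIdeal M (x * y) ∧ bIdeal M x = bIdeal M (y * x)) ∨
      (bIdeal M y = bIdeal M (y * x) ∧ bIdeal M y = bIdeal M (x * y)) := by
  have sq : ∀ x : M, bIdeal M x ⊆ bIdeal M (x * x) := fun x => by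
    have := h x x
    tauto
  have comm : ∀ x y : M, bIdeal M (x * y) ⊆ bIdeal M (y * x) := fun x y =>
    (sq (x * y)).trans <| (bI_sub M).2 ⟨x, y, by simp only [mul_assoc]⟩
  have e := (comm x y).antisymm (comm y x)
  have l := bI_mul_left M x y
  have r := bI_mul_right M x y
  rw [← e]
  have := h x y
  rw [← e] at this
  rcases this with (h | h) | (h | h)
  · exact Or.inl ⟨h.antisymm l, h.antisymm l⟩
  · exact Or.inl ⟨h.antisymm l, h.antisymm l⟩
  · exact Or.inr ⟨h.antisymm r, h.antisymm r⟩
  · exact Or.inr ⟨h.antisymm r, h.antisymm r⟩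

theorem bI_of_rI (M : Type) [Monoid M] {x z : M} (h : rIdeal M x ⊆ rIdeal M z) :
    bIdeal M x ⊆ bIdeal M z := by
  obtain ⟨b, hb⟩ := (rI_sub M).1 h
  exact (bI_sub M).2 ⟨1, b, by simpa using hb⟩

theorem bI_of_lI (M : Type) [Monoid M] {x z : M} (h : lIdeal M x ⊆ lIdeal M z) :
    bIdeal M x ⊆ bIdeal M z := by
  obtain ⟨b, hb⟩ := (lI_sub M).1 h
  exact (bI_sub M).2 ⟨b, 1, by simpa using hb⟩

/-- Let `M` be a finite monoid. The following are equivalent: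
(1) the relation `x ≤ y ↔ xM ⊆ (xy)M` is total on `M`;
(2) the relation `x ≤ y ↔ Mx ⊆ M(yx)` is total on `M`;
(3) the relation `x ≤ y ↔ MxM = M(xy)M = M(yx)M` is total on `M`;
(4) the bilateral ideals of `M` are totally ordered by inclusion and
    `M(xy)M = MxM ∩ MyM` for all `x,y ∈ M`. -/
theorem stmt1 (M : Type) [Monoid M] [Fintype M] :
    List.TFAE [
      ∀ x y : M, rIdeal M x ⊆ rIdeal M (x * y) ∨ rIdeal M y ⊆ rIdeal M (y * x),
      ∀ x y : M, lIdeal M x ⊆ lIdeal M (y * x) ∨ lIdeal M y ⊆ lIdeal M (x * y),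
      ∀ x y : M, (bIdeal M x = bIdeal M (x * y) ∧ bIdeal M x = bIdeal M (y * x)) ∨
                 (bIdeal M y = bIdeal M (y * x) ∧ bIdeal M y = bIdeal M (x * y)),
      (∀ x y : M, bIdeal M x ⊆ bIdeal M y ∨ bIdeal M y ⊆ bIdeal M x) ∧
        (∀ x y : M, bIdeal M (x * y) = bIdeal M x ∩ bIdeal M y)
    ] := by
  tfae_have 1 → 3 := fun h => three_of M fun x y =>
    (h x y).imp (fun h => Or.inl (bI_of_rI M h)) (fun h => Or.inl (bI_of_rI M h))
  tfae_have 2 → 3 := fun h => three_of M fun x y =>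
    (h x y).imp (fun h => Or.inr (bI_of_lI M h)) (fun h => Or.inr (bI_of_lI M h))
  tfae_have 3 → 1 := fun h x y =>
    (h x y).imp (fun h => stabR M h.1.subset) (fun h => stabR M h.1.subset)
  tfae_have 3 → 2 := fun h x y =>
    (h x y).imp (fun h => stabL M h.2.subset) (fun h => stabL M h.2.subset)
  tfae_have 3 → 4 := by
    intro h
    refine ⟨fun x y => ?_, fun x y => ?_⟩
    · rcases h x y with h | h
      · exact Or.inl (h.1.subset.trans (bI_mul_right M x y))
      · exact Or.inr (h.1.subset.trans (bI_mul_right M y x))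
    · refine (Set.subset_inter (bI_mul_left M x y) (bI_mul_right M x y)).antisymm ?_
      rcases h x y with h | h
      · exact Set.inter_subset_left.trans h.1.subset
      · exact Set.inter_subset_right.trans h.2.subset
  tfae_have 4 → 3 := by
    rintro ⟨h1, h2⟩ x y
    rw [h2, h2]
    rcases h1 x y with h | h
    · left
      rw [Set.inter_eq_left.2 h, Set.inter_eq_right.2 h]
      exact ⟨rfl, rfl⟩
    · right
      rw [Set.inter_eq_left.2 h, Set.inter_eq_right.2 h]
      exact ⟨rfl, rfl⟩
  tfae_finish
end

section
/- Let Q be a finite set and let M be a submonoid of the monoid of all functions Q → Q under composition. Then M satisfies: for all f,g ∈ M, M∘(f∘g)∘M = M∘f∘M or M∘(f∘g)∘M = M∘g∘M (bilateral ideals taken inside M), if and only if M is totally ordered by the relation f ⊑ g defined by range(f) ⊆ range(f ∘ g). -/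
theorem aux_pow {N : Type} [Monoid N] [Finite N] (x : N) :
    ∃ m p : ℕ, x ^ (p + 1) * x ^ m = x ^ m := by
  obtain ⟨a, b, hab, h⟩ := Finite.exists_ne_map_eq_of_infinite (fun n : ℕ => x ^ n)
  change x ^ a = x ^ b at h
  rcases lt_or_gt_of_ne hab with hl | hl
  · refine ⟨a, b - a - 1, ?_⟩
    rw [← pow_add, h]; congr 1; omega
  · refine ⟨b, a - b - 1, ?_⟩
    rw [← pow_add, ← h]; congr 1; omega

theorem aux_stable {N : Type} [Monoid N] [Finite N] (f g x y : N) (h : f = x * (f * g) * y) :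
    ∃ z, f = f * g * z := by
  have hn : ∀ n : ℕ, f = x ^ n * f * (g * y) ^ n := by
    intro n
    induction n with
    | zero => simp
    | succ n ih =>
      calc f = x ^ n * f * (g * y) ^ n := ih
        _ = x ^ n * (x * (f * g) * y) * (g * y) ^ n := by rw [← h]
        _ = x ^ (n + 1) * f * (g * y) ^ (n + 1) := by
          rw [pow_succ x, pow_succ' (g * y)]; simp only [mul_assoc]
  obtain ⟨m, p, hp⟩ := aux_pow x
  have h1 : x ^ (p + 1) * f = f := by
    have h3 := hn m
    calc x ^ (p + 1) * f = x ^ (p + 1) * (x ^ m * f * (g * y) ^ m) := by rw [← h3]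
      _ = (x ^ (p + 1) * x ^ m) * f * (g * y) ^ m := by simp only [mul_assoc]
      _ = f := by rw [hp, ← h3]
  have h2 := hn (p + 1)
  rw [h1] at h2
  refine ⟨y * (g * y) ^ p, h2.trans ?_⟩
  rw [pow_succ' (g * y)]; simp only [mul_assoc]

theorem aux_self {N : Type} [Monoid N] (m : N) : m ∈ bIdeal N m := ⟨1, 1, by simp⟩

theorem aux_sub {N : Type} [Monoid N] {a b : N} (h : a ∈ bIdeal N b) :
    bIdeal N a ⊆ bIdeal N b := by
  obtain ⟨x, y, rfl⟩ := h
  rintro _ ⟨u, v, rfl⟩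
  exact ⟨u * x, y * v, by simp only [mul_assoc]⟩

theorem aux_range {Q : Type} [Finite Q] {M : Submonoid (Function.End Q)} {f g : M}
    (h : f ∈ bIdeal M (f * g)) : Set.range f.val ⊆ Set.range (f * g).val := by
  have : Finite (Function.End Q) := inferInstanceAs (Finite (Q → Q))
  obtain ⟨x, y, h⟩ := h
  obtain ⟨z, hz⟩ := aux_stable f g x y h
  rintro _ ⟨q, rfl⟩
  refine ⟨z.val q, ?_⟩
  exact (congrFun (congrArg Subtype.val hz) q).symm

theorem aux_fix {Q : Type} [Finite Q] {M : Submonoid (Function.End Q)} {f h : M}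
    (hf : Set.range f.val ⊆ Set.range h.val)
    (hh : Set.range h.val ⊆ Set.range (h * h).val) : ∃ p : ℕ, h ^ (p + 1) * f = f := by
  have : Finite (Function.End Q) := inferInstanceAs (Finite (Q → Q))
  have hr : ∀ n : ℕ, ∀ q, ∃ r, h.val q = (h ^ n).val (h.val r) := by
    intro n
    induction n with
    | zero => intro q; exact ⟨q, rfl⟩
    | succ n ih =>
      intro q
      obtain ⟨r, hr⟩ := ih q
      obtain ⟨s, hs⟩ := hh ⟨r, rfl⟩
      refine ⟨s, ?_⟩
      rw [hr, ← hs, pow_succ]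
      rfl
  obtain ⟨m, p, hp⟩ := aux_pow h
  refine ⟨p, Subtype.ext (funext fun q => ?_)⟩
  obtain ⟨q', hq'⟩ := hf ⟨q, rfl⟩
  obtain ⟨r, hr⟩ := hr m q'
  have h1 : f.val q = (h ^ m).val (h.val r) := hq'.symm.trans hr
  change (h ^ (p + 1)).val (f.val q) = f.val q
  rw [h1]
  exact congrFun (congrArg Subtype.val hp) (h.val r)

/-- Let `Q` be a finite set and `M` a submonoid of the monoid of all functions `Q → Q`
under composition. Then `M` satisfies: for all `f,g ∈ M`,
`M∘(f∘g)∘M = M∘f∘M` or `M∘(f∘g)∘M = M∘g∘M` (bilateral ideals taken inside `M`),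
if and only if `M` is totally ordered by the relation `f ⊑ g` defined by
`range(f) ⊆ range(f ∘ g)`. -/
theorem stmt2 (Q : Type) [Fintype Q] (M : Submonoid (Function.End Q)) :
    (∀ f g : M, bIdeal M (f * g) = bIdeal M f ∨ bIdeal M (f * g) = bIdeal M g)
    ↔ (∀ f g : M,
        Set.range (f : M).val ⊆ Set.range ((f : M) * g).val ∨
        Set.range (g : M).val ⊆ Set.range ((g : M) * f).val) := by
  constructor
  · intro H f g
    rcases H f g with h1 | h1
    · exact Or.inl (aux_range (h1 ▸ aux_self f))
    rcases H g f with h2 | h2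
    · exact Or.inr (aux_range (h2 ▸ aux_self g))
    left
    apply aux_range
    rw [h1]
    have : f ∈ bIdeal M (g * f) := h2 ▸ aux_self f
    exact aux_sub ⟨1, f, by simp⟩ this
  · intro H f g
    have key : ∀ a b : M, Set.range a.val ⊆ Set.range (a * b).val →
        ∃ p : ℕ, (a * b) ^ (p + 1) * a = a := fun a b h =>
      aux_fix h ((H (a * b) (a * b)).elim id id)
    rcases H f g with h | h
    · left
      obtain ⟨p, hp⟩ := key f g h
      refine Set.Subset.antisymm (aux_sub ⟨1, g, by simp⟩) (aux_sub ⟨1, (f * g) ^ p * f, ?_⟩)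
      rw [one_mul, ← mul_assoc, ← pow_succ', hp]
    · right
      obtain ⟨p, hp⟩ := key g f h
      refine Set.Subset.antisymm (aux_sub ⟨f, 1, by simp⟩) (aux_sub ⟨(g * f) ^ p * g, 1, ?_⟩)
      rw [mul_one]
      conv_lhs => rw [← hp]
      rw [pow_succ]; simp only [mul_assoc]
end

section
/- Let M be a finite totally ordered monoid. For all a,b,c ∈ M with MbM ⊆ MaM: if a·b·c = a·b then b·c = b; and if c·b·a = b·a then c·b = b. -/
theorem iter_eq {M : Type} [Monoid M] {u b v : M} (h : b = u * b * v) (n : ℕ) :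
    b = u ^ n * b * v ^ n := by
  induction n with
  | zero => simp
  | succ n ih =>
    calc b = u ^ n * b * v ^ n := ih
      _ = u ^ n * (u * b * v) * v ^ n := by rw [← h]
      _ = u ^ (n + 1) * b * v ^ (n + 1) := by
        rw [pow_succ u, pow_succ' v]; simp only [mul_assoc]

theorem exists_pow_rep {M : Type} [Monoid M] [Fintype M] (u : M) :
    ∃ i k : ℕ, u ^ i = u ^ (i + (k + 1)) := by
  obtain ⟨i, j, hij, h⟩ := Finite.exists_ne_map_eq_of_infinite (fun n : ℕ => u ^ n)
  rcases lt_or_gt_of_ne hij with hl | hl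
  · exact ⟨i, j - i - 1, by rw [show i + (j - i - 1 + 1) = j by omega]; exact h⟩
  · exact ⟨j, i - j - 1, by rw [show j + (i - j - 1 + 1) = i by omega]; exact h.symm⟩

theorem left_fix {M : Type} [Monoid M] [Fintype M] {u b v : M} (h : b = u * b * v) :
    ∃ k : ℕ, b = u ^ k * u * b := by
  obtain ⟨i, k, hk⟩ := exists_pow_rep u
  refine ⟨k, ?_⟩
  have hb := iter_eq h i
  calc b = u ^ i * b * v ^ i := hb
    _ = u ^ (k + 1 + i) * b * v ^ i := by rw [hk, add_comm i]
    _ = u ^ (k + 1) * (u ^ i * b * v ^ i) := by rw [pow_add]; simp only [mul_assoc]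
    _ = u ^ k * u * b := by rw [← hb, pow_succ]

theorem right_fix {M : Type} [Monoid M] [Fintype M] {u b v : M} (h : b = u * b * v) :
    ∃ k : ℕ, b = b * (v * v ^ k) := by
  obtain ⟨i, k, hk⟩ := exists_pow_rep v
  refine ⟨k, ?_⟩
  have hb := iter_eq h i
  calc b = u ^ i * b * v ^ i := hb
    _ = u ^ i * b * v ^ (i + (k + 1)) := by rw [← hk]
    _ = (u ^ i * b * v ^ i) * v ^ (k + 1) := by rw [pow_add]; simp only [mul_assoc]
    _ = b * (v * v ^ k) := by rw [← hb, pow_succ']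

theorem self_mem_bIdeal {M : Type} [Monoid M] (b : M) : b ∈ bIdeal M b := ⟨1, 1, by simp⟩

/-- Cancellation property: let `M` be a finite totally ordered monoid
(for all `a,b`, `M(ab)M = MaM` or `M(ab)M = MbM`). For all `a,b,c ∈ M` with
`MbM ⊆ MaM`: if `a·b·c = a·b` then `b·c = b`; and if `c·b·a = b·a` then `c·b = b`. -/
theorem stmt3 (M : Type) [Monoid M] [Fintype M]
    (hM : ∀ a b : M, bIdeal M (a * b) = bIdeal M a ∨ bIdeal M (a * b) = bIdeal M b)
    (a b c : M) (hba : bIdeal M b ⊆ bIdeal M a) :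
    (a * b * c = a * b → b * c = b) ∧ (c * b * a = b * a → c * b = b) := by
  constructor
  · intro h
    have hb : b ∈ bIdeal M (a * b) := by
      rcases hM a b with e | e
      · rw [e]; exact hba (self_mem_bIdeal b)
      · rw [e]; exact self_mem_bIdeal b
    obtain ⟨x, y, hxy⟩ := hb
    obtain ⟨k, hk⟩ := left_fix (u := x * a) (b := b) (v := y) (by rw [mul_assoc x a b]; exact hxy)
    have hk2 : b = (x * a) ^ k * x * (a * b) := by
      simpa only [mul_assoc] using hk
    calc b * c = (x * a) ^ k * x * (a * b) * c := by rw [← hk2]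
      _ = (x * a) ^ k * x * (a * b * c) := by simp only [mul_assoc]
      _ = b := by rw [h, ← hk2]
  · intro h
    have hb : b ∈ bIdeal M (b * a) := by
      rcases hM b a with e | e
      · rw [e]; exact self_mem_bIdeal b
      · rw [e]; exact hba (self_mem_bIdeal b)
    obtain ⟨x, y, hxy⟩ := hb
    obtain ⟨k, hk⟩ := right_fix (u := x) (b := b) (v := a * y)
      (by simpa only [mul_assoc] using hxy)
    have hk2 : b = (b * a) * (y * (a * y) ^ k) := by
      simpa only [mul_assoc] using hk
    calc c * b = c * ((b * a) * (y * (a * y) ^ k)) := by rw [← hk2]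
      _ = (c * b * a) * (y * (a * y) ^ k) := by simp only [mul_assoc]
      _ = b := by rw [h, ← hk2]
end

section
/- Let M be a finite monoid such that for all x,y ∈ M, either xM ⊆ (xy)M or yM ⊆ (xy)M. Then there exists a natural number k ≥ 2 such that x^k = x for all x ∈ M. -/
/-- Let `M` be a finite monoid such that for all `x,y ∈ M`, either `xM ⊆ (xy)M` or
`yM ⊆ (xy)M`. Then there exists `k ≥ 2` such that `x^k = x` for all `x ∈ M`. -/
theorem stmt4 (M : Type) [Monoid M] [Fintype M]
    (hM : ∀ x y : M, rIdeal M x ⊆ rIdeal M (x * y) ∨ rIdeal M y ⊆ rIdeal M (x * y)) :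
    ∃ k : ℕ, 2 ≤ k ∧ ∀ x : M, x ^ k = x := by
  have key : ∀ x : M, ∃ y : M, x = x * x * y := by
    intro x
    have h : rIdeal M x ⊆ rIdeal M (x * x) := (hM x x).elim id id
    exact h ⟨1, (mul_one x).symm⟩
  have iter : ∀ x y : M, x = x * x * y → ∀ n : ℕ, x = x ^ (n + 1) * y ^ n := by
    intro x y h n
    induction n with
    | zero => simp
    | succ n ih =>
      calc x = x ^ (n + 1) * y ^ n := ih
        _ = x ^ n * (x * x * y) * y ^ n := by rw [← h, pow_succ]
        _ = x ^ (n + 1 + 1) * y ^ (n + 1) := by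
          rw [pow_succ x (n + 1), pow_succ x n, pow_succ' y n]
          simp only [mul_assoc]
  have aux : ∃ i j : ℕ, i < j ∧ ∀ x : M, x ^ i = x ^ j := by
    obtain ⟨i, j, hij, h⟩ :=
      Finite.exists_ne_map_eq_of_infinite (fun (i : ℕ) (x : M) => x ^ i)
    rcases lt_or_gt_of_ne hij with h1 | h1
    · exact ⟨i, j, h1, fun x => congrFun h x⟩
    · exact ⟨j, i, h1, fun x => (congrFun h x).symm⟩
  obtain ⟨i, j, hij, h⟩ := aux
  refine ⟨j - i + 1, by omega, fun x => ?_⟩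
  obtain ⟨y, hy⟩ := key x
  have e := iter x y hy i
  calc x ^ (j - i + 1) = x ^ (j - i) * x := pow_succ _ _
    _ = x ^ (j - i) * (x ^ (i + 1) * y ^ i) := by rw [← e]
    _ = x ^ (j + 1) * y ^ i := by
      rw [← mul_assoc, ← pow_add]
      congr 2
      omega
    _ = x ^ (i + 1) * y ^ i := by rw [pow_succ x j, ← h x, ← pow_succ]
    _ = x := e.symm
end

section
/- Let M be a finite monoid such that for all x,y ∈ M, either xM ⊆ (xy)M or yM ⊆ (xy)M. Then for all x,y ∈ M there exists a natural number k ≥ 1 such that (x·y)^k·x = x or (y·x)^k·y = y. -/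
theorem aux_iter {M : Type} [Monoid M] {p y q : M} (h : y = p * y * q) (n : ℕ) :
    y = p ^ n * y * q ^ n := by
  induction n with
  | zero => simp
  | succ n ih =>
    calc y = p ^ n * y * q ^ n := ih
      _ = p ^ n * (p * y * q) * q ^ n := by rw [← h]
      _ = p ^ (n + 1) * y * q ^ (n + 1) := by
        rw [pow_succ p, pow_succ' q]; simp only [mul_assoc]

theorem aux_period {M : Type} [Monoid M] [Fintype M] {a z : M} (h : a = a * a * z) :
    ∃ m : ℕ, 1 ≤ m ∧ a ^ m * a = a := by
  obtain ⟨i, j, hij, he⟩ := Finite.exists_ne_map_eq_of_infinite (fun n : ℕ => a ^ n)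
  wlog hlt : i < j generalizing i j
  · exact this j i hij.symm he.symm (by omega)
  refine ⟨j - i, by omega, ?_⟩
  have hi := aux_iter h i
  have : a ^ (j - i) * a ^ i = a ^ i := by rw [← pow_add, he]; congr 1; omega
  calc a ^ (j - i) * a = a ^ (j - i) * (a ^ i * a * z ^ i) := by rw [← hi]
    _ = a ^ (j - i) * a ^ i * a * z ^ i := by simp only [mul_assoc]
    _ = a := by rw [this, ← hi]

theorem aux_absorb {M : Type} [Monoid M] {a b z : M} {m : ℕ} (hm : a ^ m * a = a)
    (h : b = a * z) : a ^ m * b = b := by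
  rw [h, ← mul_assoc, hm]

/-- Let `M` be a finite monoid such that for all `x,y ∈ M`, either `xM ⊆ (xy)M` or
`yM ⊆ (xy)M`. Then for all `x,y ∈ M` there exists `k ≥ 1` such that
`(x·y)^k·x = x` or `(y·x)^k·y = y`. -/
theorem stmt5 (M : Type) [Monoid M] [Fintype M]
    (hM : ∀ x y : M, rIdeal M x ⊆ rIdeal M (x * y) ∨ rIdeal M y ⊆ rIdeal M (x * y))
    (x y : M) :
    ∃ k : ℕ, 1 ≤ k ∧ ((x * y) ^ k * x = x ∨ (y * x) ^ k * y = y) := by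
  have sub : ∀ a b : M, rIdeal M a ⊆ rIdeal M b → ∃ z, a = b * z := fun a b h =>
    h ⟨1, (mul_one a).symm⟩
  have per : ∀ a : M, ∃ m : ℕ, 1 ≤ m ∧ a ^ m * a = a := by
    intro a
    have : ∃ z, a = a * a * z := (hM a a).elim (sub _ _) (sub _ _)
    obtain ⟨z, hz⟩ := this
    exact aux_period hz
  rcases hM x y with h | h
  · obtain ⟨z, hz⟩ := sub _ _ h
    obtain ⟨m, h1, hm⟩ := per (x * y)
    exact ⟨m, h1, Or.inl (aux_absorb hm hz)⟩
  · obtain ⟨z, hz⟩ := sub _ _ h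
    obtain ⟨m, h1, hm⟩ := per (x * y)
    obtain ⟨n, hn1, hn⟩ := per x
    obtain ⟨k, hk1, hk⟩ := per (y * x)
    have hy : (x * y) ^ m * y = y := aux_absorb hm hz
    have hxy : x ^ n * y = y := aux_absorb hn (hz.trans (mul_assoc _ _ _))
    obtain ⟨w, hw⟩ : ∃ w, y = x * y * (x * w) := by
      obtain ⟨r, rfl⟩ : ∃ r, m = r + 1 := ⟨m - 1, by omega⟩
      refine ⟨y * (x * y) ^ r * (x * y) ^ r * y, ?_⟩
      calc y = (x * y) ^ (r + 1) * ((x * y) ^ (r + 1) * y) := by rw [hy, hy]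
        _ = (x * y) * (x * y) * (x * y) ^ r * (x * y) ^ r * y := by
          have hc : (x * y) ^ r * (x * y) = (x * y) * (x * y) ^ r := (pow_succ _ _).symm.trans (pow_succ' _ _)
          rw [pow_succ' (x * y) r]
          generalize (x * y) ^ r = c at hc
          generalize x * y = d at hc
          calc d * c * (d * c * y) = d * (c * d) * c * y := by simp only [mul_assoc]
            _ = _ := by rw [hc]; simp only [mul_assoc]
        _ = x * y * (x * (y * (x * y) ^ r * (x * y) ^ r * y)) := by
          generalize (x * y) ^ r = c
          simp only [mul_assoc]
    have hfin := aux_iter hw n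
    rw [hxy] at hfin
    obtain ⟨s, rfl⟩ : ∃ s, n = s + 1 := ⟨n - 1, by omega⟩
    rw [pow_succ'] at hfin
    refine ⟨k, hk1, Or.inr (aux_absorb (z := w * (x * w) ^ s) hk ?_)⟩
    simpa only [mul_assoc] using hfin
end

section
/- Let M be a finite monoid and x,y ∈ M such that M(xy)M = MxM. Then xM ⊆ (xy)M. -/
/-- Let `M` be a finite monoid and `x,y ∈ M` such that `M(xy)M = MxM`.
Then `xM ⊆ (xy)M`. -/
theorem stmt6 (M : Type) [Monoid M] [Fintype M] (x y : M)
    (h : bIdeal M (x * y) = bIdeal M x) :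
    rIdeal M x ⊆ rIdeal M (x * y) := by
  have hx : x ∈ bIdeal M (x * y) := by
    rw [h]
    exact ⟨1, 1, by simp⟩
  obtain ⟨u, v, huv⟩ := hx
  have key : ∀ n : ℕ, u ^ n * x * (y * v) ^ n = x := by
    intro n
    induction n with
    | zero => simp
    | succ k ih =>
      calc u ^ (k + 1) * x * (y * v) ^ (k + 1)
          = u ^ k * (u * (x * y) * v) * (y * v) ^ k := by
            rw [pow_succ, pow_succ']
            simp only [mul_assoc]
        _ = x := by rw [← huv, ih]
  obtain ⟨i, j, hij, hb⟩ : ∃ i j : ℕ, i < j ∧ (y * v) ^ i = (y * v) ^ j := by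
    obtain ⟨i, j, hne, he⟩ :=
      Finite.exists_ne_map_eq_of_infinite (fun n : ℕ => (y * v) ^ n)
    rcases lt_or_gt_of_ne hne with hlt | hlt
    · exact ⟨i, j, hlt, he⟩
    · exact ⟨j, i, hlt, he.symm⟩
  obtain ⟨d, rfl⟩ := Nat.exists_eq_add_of_lt hij
  have hfix : x = x * (y * v) ^ (d + 1) := by
    calc x = u ^ i * x * (y * v) ^ (i + d + 1) := by rw [← hb, key]
      _ = (u ^ i * x * (y * v) ^ i) * (y * v) ^ (d + 1) := by
        rw [add_assoc, pow_add, ← mul_assoc]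
      _ = x * (y * v) ^ (d + 1) := by rw [key]
  rintro z ⟨w, rfl⟩
  refine ⟨v * (y * v) ^ d * w, ?_⟩
  calc x * w = x * (y * v) ^ (d + 1) * w := by rw [← hfix]
    _ = x * y * (v * (y * v) ^ d * w) := by
      rw [pow_succ']
      simp only [mul_assoc]
end

section
/- Let m ≥ 1 and let S be the semigroup on {1,…,m} × {1,…,m} with multiplication (a,b)·(c,d) = (min(a,c), d). Let M be the monoid obtained from S by adjoining an identity element. Then M is totally ordered, i.e., for all x,y ∈ M, M(xy)M = MxM or M(xy)M = MyM. -/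
/-- The semigroup on `{1,…,m} × {1,…,m}` with multiplication `(a,b)·(c,d) = (min(a,c), d)`. -/
def S (m : ℕ) : Type := Fin m × Fin m

instance (m : ℕ) : Mul (S m) := ⟨fun p q => (min p.1 q.1, q.2)⟩

instance (m : ℕ) : Semigroup (S m) where
  mul_assoc p q r := by
    show ((min (min p.1 q.1) r.1, r.2) : S m) = ((min p.1 (min q.1 r.1), r.2) : S m)
    rw [min_assoc]

theorem bIdeal_sub_of_eq {M : Type} [Monoid M] {p q u v : M} (h : p = u * q * v) :
    bIdeal M p ⊆ bIdeal M q := by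
  rintro z ⟨x, y, rfl⟩
  exact ⟨x * u, v * y, by rw [h]; simp only [mul_assoc]⟩

theorem S_mul_of_fst (m : ℕ) (p q : S m) (h : p.1 = q.1) : q * p = p := by
  show ((min q.1 p.1, p.2) : S m) = p
  rw [← h, min_self]
  rfl

theorem bIdeal_S_eq (m : ℕ) (p q : S m) (h : p.1 = q.1) :
    bIdeal (WithOne (S m)) (p : WithOne (S m)) = bIdeal (WithOne (S m)) (q : WithOne (S m)) := by
  apply Set.Subset.antisymm
  · refine bIdeal_sub_of_eq (u := 1) (v := (p : WithOne (S m))) ?_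
    rw [one_mul, ← WithOne.coe_mul, S_mul_of_fst m p q h]
  · refine bIdeal_sub_of_eq (u := 1) (v := (q : WithOne (S m))) ?_
    rw [one_mul, ← WithOne.coe_mul, S_mul_of_fst m q p h.symm]

/-- Let `m ≥ 1`, `S` the semigroup on `{1,…,m} × {1,…,m}` with
`(a,b)·(c,d) = (min(a,c), d)`, and `M` the monoid obtained from `S` by adjoining an
identity element. Then `M` is totally ordered: for all `x,y ∈ M`,
`M(xy)M = MxM` or `M(xy)M = MyM`. -/
theorem stmt9 (m : ℕ) (hm : 1 ≤ m) (x y : WithOne (S m)) :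
    bIdeal (WithOne (S m)) (x * y) = bIdeal (WithOne (S m)) x ∨
    bIdeal (WithOne (S m)) (x * y) = bIdeal (WithOne (S m)) y := by
  induction x using WithOne.recOneCoe with
  | one => right; rw [one_mul]
  | coe p =>
    induction y using WithOne.recOneCoe with
    | one => left; rw [mul_one]
    | coe q =>
      rw [← WithOne.coe_mul]
      have h : (p * q).1 = min p.1 q.1 := rfl
      rcases le_total p.1 q.1 with hl | hl
      · left
        exact bIdeal_S_eq m _ _ (h.trans (min_eq_left hl))
      · right
        exact bIdeal_S_eq m _ _ (h.trans (min_eq_right hl))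
end

section
/- Let (Q,≤) be a well-quasi-ordered set of vertex labels and let (L,≤) be a finite totally ordered set of edge labels. Then the collection of finite rooted trees with vertices labelled in Q and edges labelled in L, quasi-ordered by the gap embedding relation, is well-quasi-ordered: every infinite sequence of such trees contains a pair T_i, T_j with i < j and a gap embedding from T_i to T_j. -/
/-- A finite rooted tree with vertex labels in `Q` and edge labels in `L`.
Vertices are `Fin n`; each vertex has a parent (the root is its own parent) and every
vertex reaches the root by iterating `parent`. `elbl v` is the label of the edge from
`v` to its parent (meaningless at the root). -/
structure RTree (Q L : Type) where
  n : ℕ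
  npos : 0 < n
  root : Fin n
  parent : Fin n → Fin n
  parent_root : parent root = root
  reach : ∀ v, ∃ k, parent^[k] v = root
  vlbl : Fin n → Q
  elbl : Fin n → L

/-- `y` is an ancestor of `x` (reflexively). -/
def RTree.anc {Q L : Type} (T : RTree Q L) (x y : Fin T.n) : Prop :=
  ∃ k, T.parent^[k] x = y

/-- A gap embedding from `T` to `T'`: an injective map on vertices respecting the
ancestor relation, with `leQ`-increasing vertex labels, and such that for every edge
from `x` to its parent, all edge labels on the corresponding path in `T'` are `leL`-above
the label of the edge, the lowest one being exactly equal to it. -/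
def GapEmbed {Q L : Type} (leQ : Q → Q → Prop) (leL : L → L → Prop)
    (T T' : RTree Q L) : Prop :=
  ∃ h : Fin T.n → Fin T'.n, Function.Injective h ∧
    (∀ x y, T'.anc (h x) (h y) ↔ T.anc x y) ∧
    (∀ x, leQ (T.vlbl x) (T'.vlbl (h x))) ∧
    (∀ x, x ≠ T.root →
      ∃ K, 0 < K ∧ T'.parent^[K] (h x) = h (T.parent x) ∧
        (∀ k, 0 < k → k < K → T'.parent^[k] (h x) ≠ h (T.parent x)) ∧
        (∀ k < K, leL (T.elbl x) (T'.elbl (T'.parent^[k] (h x)))) ∧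
        T'.elbl (h x) = T.elbl x)

/-- Planted trees: every vertex (the root included) carries an edge label above it. -/
inductive PT (Q : Type) : Type
  | node (l : ℕ) (q : Q) (k : ℕ) (c : Fin k → PT Q) : PT Q

namespace PT

variable {Q : Type}

/-- Label of the stem. -/
def stem : PT Q → ℕ
  | node l _ _ _ => l

/-- Number of vertices. -/
def size : PT Q → ℕ
  | node _ _ _ c => 1 + ∑ i, size (c i)

theorem size_child (l : ℕ) (q : Q) (k : ℕ) (c : Fin k → PT Q) (i : Fin k) :
    (c i).size < (node l q k c).size := by
  have h := Finset.single_le_sum (f := fun i => (c i).size) (fun _ _ => Nat.zero_le _)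
    (Finset.mem_univ i)
  simp only [size]
  omega

/-- Gap embedding of planted trees. -/
inductive Emb (r : Q → Q → Prop) : PT Q → PT Q → Prop
  | same (l : ℕ) (q q' : Q) (k k' : ℕ) (c : Fin k → PT Q) (c' : Fin k' → PT Q)
      (f : Fin k → Fin k') (hf : Function.Injective f) (hq : r q q')
      (hc : ∀ i, Emb r (c i) (c' (f i))) : Emb r (node l q k c) (node l q' k' c')
  | deep (P : PT Q) (l' : ℕ) (q' : Q) (k' : ℕ) (c' : Fin k' → PT Q) (i : Fin k')
      (hl : P.stem ≤ l') (hc : Emb r P (c' i)) : Emb r P (node l' q' k' c')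

theorem Emb.refl {r : Q → Q → Prop} (hr : ∀ q, r q q) (P : PT Q) : Emb r P P := by
  induction P with
  | node l q k c ih => exact Emb.same l q q k k c c id (fun _ _ h => h) (hr q) ih

theorem Emb.stem_le {r : Q → Q → Prop} {P P' : PT Q} (h : Emb r P P') : P.stem ≤ P'.stem := by
  cases h with
  | same => exact le_rfl
  | deep _ _ _ _ _ _ hl => exact hl

theorem Emb.trans {r : Q → Q → Prop} (hr : ∀ a b c, r a b → r b c → r a c) {P' P'' : PT Q}
    (h' : Emb r P' P'') : ∀ {P : PT Q}, Emb r P P' → Emb r P P'' := by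
  induction h' with
  | same l q q' k k' c c' f hf hq hc ih =>
    intro P h
    cases h with
    | same _ q0 _ k0 _ c0 _ g hg hq0 hc0 =>
      exact Emb.same _ _ _ _ _ _ _ (f ∘ g) (hf.comp hg) (hr _ _ _ hq0 hq)
        (fun i => ih _ (hc0 i))
    | deep _ _ _ _ _ i hl hc0 => exact Emb.deep _ _ _ _ _ (f i) hl (ih i hc0)
  | deep P1 l' q' k' c' i hl hc ih =>
    intro P h
    exact Emb.deep _ _ _ _ _ i (h.stem_le.trans hl) (ih h)

/-- `Sub m s P`: `s` is a subtree of `P` reached through labels at least `m`. -/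
inductive Sub (m : ℕ) (s : PT Q) : PT Q → Prop
  | refl : Sub m s s
  | step (l : ℕ) (q : Q) (k : ℕ) (c : Fin k → PT Q) (i : Fin k) (hl : m ≤ l)
      (h : Sub m s (c i)) : Sub m s (node l q k c)

theorem Sub.size_le {m : ℕ} {s P : PT Q} (h : Sub m s P) : s.size ≤ P.size := by
  induction h with
  | refl => exact le_rfl
  | step l q k c i hl h ih => exact ih.trans (size_child l q k c i).le

theorem Sub.emb {r : Q → Q → Prop} {m : ℕ} {s P P0 : PT Q} (h : Sub m s P)
    (h0 : Emb r P0 s) (hm : P0.stem = m) : Emb r P0 P := by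
  induction h with
  | refl => exact h0
  | step l q k c i hl h ih => exact Emb.deep _ _ _ _ _ i (hm ▸ hl) ih

/-- Trees generated from the atoms `A` by nodes with labels in `[m, N)`. -/
inductive Gen (N m : ℕ) (A : Set (PT Q)) : PT Q → Prop
  | atom (P : PT Q) (h : P ∈ A) : Gen N m A P
  | node (l : ℕ) (q : Q) (k : ℕ) (c : Fin k → PT Q) (hl : m ≤ l) (hN : l < N)
      (hc : ∀ i, Gen N m A (c i)) : Gen N m A (PT.node l q k c)

theorem Gen.lift {N m : ℕ} {A S : Set (PT Q)} {P : PT Q} (h : Gen N m A P)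
    (hS : ∀ s, Sub m s P → s.stem = m → Gen N m A s → s ∈ S) : Gen N (m + 1) (A ∪ S) P := by
  induction h with
  | atom P h => exact Gen.atom _ (Or.inl h)
  | node l q k c hl hN hc ih =>
    rcases hl.eq_or_lt with rfl | hlt
    · exact Gen.atom _ (Or.inr (hS _ Sub.refl rfl (Gen.node _ _ _ _ hl hN hc)))
    · exact Gen.node _ _ _ _ hlt hN
        (fun i => ih i (fun s hs => hS s (Sub.step _ _ _ _ i hl hs)))

theorem exists_inj_of_sublist {α : Type} {R : α → α → Prop} {k k' : ℕ} {c : Fin k → α}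
    {c' : Fin k' → α} (h : List.SublistForall₂ R (List.ofFn c) (List.ofFn c')) :
    ∃ f : Fin k → Fin k', Function.Injective f ∧ ∀ i, R (c i) (c' (f i)) := by
  obtain ⟨l, h1, h2⟩ := List.sublistForall₂_iff.1 h
  obtain ⟨hlen, h1⟩ := List.forall₂_iff_get.1 h1
  obtain ⟨g, hg⟩ := List.sublist_iff_exists_fin_orderEmbedding_get_eq.1 h2
  have hk : k = l.length := by simpa using hlen
  have hk' : (List.ofFn c').length = k' := by simp
  refine ⟨fun i => Fin.cast hk' (g (Fin.cast hk i)), ?_, ?_⟩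
  · intro i j hij
    have := g.injective (Fin.cast_injective _ hij)
    exact Fin.cast_injective _ this
  · intro i
    have h3 := h1 i.1 (by simp) (hk ▸ i.2)
    have h4 := hg (Fin.cast hk i)
    have h5 : l.get ⟨i.1, hk ▸ i.2⟩ = l.get (Fin.cast hk i) := rfl
    rw [h5, h4] at h3
    simp only [List.get_ofFn] at h3
    exact h3

theorem gen_pwo {r : Q → Q → Prop} (hrefl : ∀ q, r q q)
    (htrans : ∀ a b c, r a b → r b c → r a c) (hwqo : ∀ f : ℕ → Q, ∃ i j, i < j ∧ r (f i) (f j))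
    (N : ℕ) : ∀ (d m : ℕ), m + d = N → ∀ A : Set (PT Q),
      A.PartiallyWellOrderedOn (Emb r) → {P | Gen N m A P}.PartiallyWellOrderedOn (Emb r) := by
  have hpre : IsPreorder (PT Q) (Emb r) :=
    { refl := Emb.refl hrefl, trans := fun _ _ _ h h' => Emb.trans htrans h' h }
  have hpreQ : IsPreorder Q r := { refl := hrefl, trans := htrans }
  have hQ : (Set.univ : Set Q).PartiallyWellOrderedOn r :=
    Set.partiallyWellOrderedOn_univ_iff.2 hwqo
  intro d
  induction d with
  | zero =>
    intro m hm A hA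
    refine hA.mono ?_
    rintro P (⟨_, h⟩ | ⟨l, q, k, c, hl, hN, hc⟩)
    · exact h
    · omega
  | succ d ih =>
    intro m hm A hA
    have key : {P | Gen N m A P ∧ P.stem = m}.PartiallyWellOrderedOn (Emb r) := by
      have key' : {P | Gen N m A P ∧ P.stem = m ∧ P ∉ A}.PartiallyWellOrderedOn (Emb r) := by
        rw [Set.PartiallyWellOrderedOn.iff_not_exists_isMinBadSeq size]
        rintro ⟨f, hf, hmin⟩
        let S : Set (PT Q) := {s | (Gen N m A s ∧ s.stem = m ∧ s ∉ A) ∧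
          ∃ n, Sub m s (f n) ∧ s.size < (f n).size}
        have hS : S.PartiallyWellOrderedOn (Emb r) := by
          rw [Set.PartiallyWellOrderedOn.iff_forall_not_isBadSeq]
          rintro g ⟨hgS, hg⟩
          choose p hp using fun n => (hgS n).2
          obtain ⟨n0, hn0⟩ : ∃ n0, ∀ n, p n0 ≤ p n := by
            obtain ⟨_, ⟨n0, rfl⟩, h⟩ := WellFounded.has_min Nat.lt_wfRel.wf (Set.range p)
              ⟨_, ⟨0, rfl⟩⟩
            exact ⟨n0, fun n => not_lt.1 (h _ ⟨n, rfl⟩)⟩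
          refine hmin (p n0) (fun j => if j < p n0 then f j else g (n0 + (j - p n0))) ?_ ?_ ⟨?_, ?_⟩
          · intro j hj
            simp [hj]
          · simpa using (hp n0).2
          · intro j
            simp only
            split_ifs
            · exact hf.1 j
            · exact (hgS _).1
          · intro i j hij
            simp only
            split_ifs with h1 h2 h2
            · exact hf.2 i j hij
            · intro he
              refine hf.2 i (p (n0 + (j - p n0))) (h1.trans_le (hn0 _)) ?_
              exact (hp _).1.emb he (hf.1 i).2.1
            · omega
            · exact hg _ _ (by omega)
        have hG := ih (m + 1) (by omega) (A ∪ S) (hA.union hS)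
        have hL := Set.PartiallyWellOrderedOn.partiallyWellOrderedOn_sublistForall₂ (Emb r) hG
        have hprod := hQ.prod hL
        have hnode : ∀ n, ∃ q k, ∃ c : Fin k → PT Q, f n = node m q k c ∧
            ∀ i, Gen N (m + 1) (A ∪ S) (c i) := by
          intro n
          obtain ⟨hgen, hst, hnA⟩ := hf.1 n
          have hfn : ∀ s, Sub m s (f n) → s.size < (f n).size → Gen N m A s → s.stem = m →
              s ∈ A ∪ S := by
            intro s h1 h2 h3 h4
            by_cases hs : s ∈ A
            · exact Or.inl hs
            · exact Or.inr ⟨⟨h3, h4, hs⟩, n, h1, h2⟩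
          generalize f n = P at *
          cases hgen with
          | atom _ h => exact absurd h hnA
          | node l q k c hl hN hc =>
            obtain rfl : l = m := hst
            refine ⟨q, k, c, rfl, fun i => ?_⟩
            have := (hc i).lift (S := A ∪ S) (fun s h1 h2 h3 => hfn s (Sub.step _ _ _ _ i hl h1)
              (h1.size_le.trans_lt (size_child _ _ _ _ i)) h3 h2)
            simpa [← Set.union_assoc] using this
        choose q k c hfe hc using hnode
        obtain ⟨i, j, hij, h1, h2⟩ := hprod.exists_lt (f := fun n => (q n, List.ofFn (c n)))
          (fun n => ⟨trivial, by
            intro x hx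
            obtain ⟨i, rfl⟩ := (List.mem_ofFn' _ _).1 hx
            exact hc n i⟩)
        obtain ⟨e, he, hce⟩ := exists_inj_of_sublist h2
        apply hf.2 i j hij
        rw [hfe i, hfe j]
        exact Emb.same _ _ _ _ _ _ _ e he h1 hce
      refine (hA.union key').mono ?_
      rintro P ⟨h1, h2⟩
      by_cases hs : P ∈ A
      · exact Or.inl hs
      · exact Or.inr ⟨h1, h2, hs⟩
    refine (ih (m + 1) (by omega) _ (hA.union key)).mono ?_
    intro P hP
    exact hP.lift (fun s _ h1 h2 => ⟨h2, h1⟩)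

end PT

namespace RTree

variable {Q L : Type}

theorem iter_root (T : RTree Q L) (k : ℕ) : T.parent^[k] T.root = T.root :=
  Function.iterate_fixed T.parent_root k

theorem anc_refl (T : RTree Q L) (x : Fin T.n) : T.anc x x := ⟨0, rfl⟩

theorem anc_trans (T : RTree Q L) {x y z : Fin T.n} (h : T.anc x y) (h' : T.anc y z) :
    T.anc x z := by
  obtain ⟨a, rfl⟩ := h
  obtain ⟨b, rfl⟩ := h'
  exact ⟨b + a, Function.iterate_add_apply _ _ _ _⟩

theorem anc_antisymm (T : RTree Q L) {x y : Fin T.n} (h : T.anc x y) (h' : T.anc y x) :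
    x = y := by
  obtain ⟨a, rfl⟩ := h
  obtain ⟨b, hb⟩ := h'
  rw [← Function.iterate_add_apply] at hb
  rcases Nat.eq_zero_or_pos a with rfl | ha
  · rfl
  obtain ⟨k, hk⟩ := T.reach x
  have h1 : ∀ j, k ≤ j → T.parent^[j] x = T.root := by
    intro j hj
    obtain ⟨e, rfl⟩ := Nat.exists_eq_add_of_le' hj
    rw [Function.iterate_add_apply, hk, iter_root]
  have h2 : T.parent^[(b + a) * k] x = x := by
    rw [Function.iterate_mul]
    exact Function.iterate_fixed hb k
  have h3 : x = T.root := by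
    rw [← h2]
    exact h1 _ (by nlinarith)
  rw [h3, iter_root]

theorem anc_parent (T : RTree Q L) (x : Fin T.n) : T.anc x (T.parent x) := ⟨1, rfl⟩

theorem anc_of_ne (T : RTree Q L) {x y : Fin T.n} (h : T.anc x y) (hne : x ≠ y) :
    T.anc (T.parent x) y := by
  obtain ⟨_ | a, h⟩ := h
  · exact absurd h hne
  · exact ⟨a, h⟩

theorem anc_total (T : RTree Q L) {x y z : Fin T.n} (h : T.anc x y) (h' : T.anc x z) :
    T.anc y z ∨ T.anc z y := by
  obtain ⟨a, rfl⟩ := h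
  obtain ⟨b, rfl⟩ := h'
  rcases le_total a b with hab | hab
  · obtain ⟨e, rfl⟩ := Nat.exists_eq_add_of_le' hab
    exact Or.inl ⟨e, (Function.iterate_add_apply _ _ _ _).symm⟩
  · obtain ⟨e, rfl⟩ := Nat.exists_eq_add_of_le' hab
    exact Or.inr ⟨e, (Function.iterate_add_apply _ _ _ _).symm⟩

theorem eq_root_of_parent (T : RTree Q L) {x : Fin T.n} (h : T.parent x = x) : x = T.root := by
  obtain ⟨k, hk⟩ := T.reach x
  rw [← hk]
  exact (Function.iterate_fixed h k).symm

/-- `w` is a child of `v`. -/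
def IsChild (T : RTree Q L) (v w : Fin T.n) : Prop := w ≠ T.root ∧ T.parent w = v

theorem IsChild.anc {T : RTree Q L} {v w : Fin T.n} (h : T.IsChild v w) : T.anc w v := ⟨1, h.2⟩

theorem IsChild.not_anc {T : RTree Q L} {v w : Fin T.n} (h : T.IsChild v w) : ¬ T.anc v w := by
  intro h'
  have := T.anc_antisymm h.anc h'
  exact h.1 (T.eq_root_of_parent (h.2.trans this.symm))

theorem IsChild.unique {T : RTree Q L} {v w w' x : Fin T.n} (h : T.IsChild v w)
    (h' : T.IsChild v w') (hx : T.anc x w) (hx' : T.anc x w') : w = w' := by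
  by_contra hne
  rcases T.anc_total hx hx' with h1 | h1
  · have := T.anc_of_ne h1 hne
    rw [h.2] at this
    exact h'.not_anc this
  · have := T.anc_of_ne h1 (Ne.symm hne)
    rw [h'.2] at this
    exact h.not_anc this

theorem exists_child {T : RTree Q L} {v x : Fin T.n} (h : T.anc x v) (hne : x ≠ v) :
    ∃ w, T.IsChild v w ∧ T.anc x w := by
  obtain ⟨k, hk⟩ := h
  induction k generalizing x with
  | zero => exact absurd hk hne
  | succ k ih =>
    by_cases hp : T.parent x = v
    · refine ⟨x, ⟨?_, hp⟩, T.anc_refl x⟩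
      rintro rfl
      exact hne (T.parent_root.symm.trans hp)
    · obtain ⟨w, hw, hxw⟩ := ih hp hk
      exact ⟨w, hw, T.anc_trans (T.anc_parent x) hxw⟩

/-- The planted tree `P` represents the subtree of `T` below `v`. -/
inductive Rep (φ : L → ℕ) (T : RTree Q L) : Fin T.n → PT Q → Prop
  | mk (v : Fin T.n) (k : ℕ) (e : Fin k → Fin T.n) (he : Function.Injective e)
      (hch : ∀ i, T.IsChild v (e i)) (hsurj : ∀ w, T.IsChild v w → ∃ i, e i = w)
      (c : Fin k → PT Q) (hc : ∀ i, Rep φ T (e i) (c i)) :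
      Rep φ T v (PT.node (φ (T.elbl v)) (T.vlbl v) k c)

theorem exists_rep (φ : L → ℕ) (N : ℕ) (hN : ∀ l, φ l < N) (T : RTree Q L) (v : Fin T.n) :
    ∃ P, Rep φ T v P ∧ PT.Gen N 0 ∅ P := by
  have : IsTrans (Fin T.n) (fun x y => T.anc x y ∧ x ≠ y) :=
    ⟨fun x y z h h' => ⟨T.anc_trans h.1 h'.1, by
      rintro rfl
      exact h.2 (T.anc_antisymm h.1 h'.1)⟩⟩
  have : Std.Irrefl (fun x y : Fin T.n => T.anc x y ∧ x ≠ y) := ⟨fun x h => h.2 rfl⟩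
  have wf := Finite.wellFounded_of_trans_of_irrefl (fun x y : Fin T.n => T.anc x y ∧ x ≠ y)
  induction v using wf.induction with
  | _ v ih =>
    classical
    let e := Fintype.equivFin {w // T.IsChild v w}
    have h1 : ∀ i, ∃ P, Rep φ T (e.symm i).1 P ∧ PT.Gen N 0 ∅ P := fun i =>
      ih _ ⟨(e.symm i).2.anc, fun h => by
        have := (e.symm i).2.not_anc
        rw [h] at this
        exact this (T.anc_refl v)⟩
    choose c hc hg using h1
    exact ⟨_, Rep.mk v _ (fun i => (e.symm i).1)
      (Subtype.val_injective.comp e.symm.injective) (fun i => (e.symm i).2)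
      (fun w hw => ⟨e ⟨w, hw⟩, by simp⟩) c hc, PT.Gen.node _ _ _ _ (Nat.zero_le _) (hN _) hg⟩

theorem Rep.stem {φ : L → ℕ} {T : RTree Q L} {v : Fin T.n} {P : PT Q} (h : Rep φ T v P) :
    P.stem = φ (T.elbl v) := by
  cases h
  rfl

/-- Gap embeddings of the subtree below `v` into the subtree below `v'`. -/
structure Loc (r : Q → Q → Prop) (φ : L → ℕ) (T T' : RTree Q L) (v : Fin T.n) (v' : Fin T'.n)
    (h : Fin T.n → Fin T'.n) : Prop where
  top : ∃ K, T'.parent^[K] (h v) = v' ∧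
    ∀ k ≤ K, φ (T.elbl v) ≤ φ (T'.elbl (T'.parent^[k] (h v)))
  top_eq : φ (T'.elbl (h v)) = φ (T.elbl v)
  lbl : ∀ x, T.anc x v → r (T.vlbl x) (T'.vlbl (h x))
  gap : ∀ x, T.anc x v → x ≠ v → ∃ K, 0 < K ∧ T'.parent^[K] (h x) = h (T.parent x) ∧
    (∀ k < K, φ (T.elbl x) ≤ φ (T'.elbl (T'.parent^[k] (h x)))) ∧
    φ (T'.elbl (h x)) = φ (T.elbl x)
  anc : ∀ x y, T.anc x v → T.anc y v → (T'.anc (h x) (h y) ↔ T.anc x y)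

theorem Loc.below {r : Q → Q → Prop} {φ : L → ℕ} {T T' : RTree Q L} {v : Fin T.n} {v' : Fin T'.n}
    {h : Fin T.n → Fin T'.n} (H : Loc r φ T T' v v' h) {x : Fin T.n} (hx : T.anc x v) :
    T'.anc (h x) v' := by
  obtain ⟨K, hK, -⟩ := H.top
  exact T'.anc_trans ((H.anc x v hx (T.anc_refl v)).2 hx) ⟨K, hK⟩

theorem exists_loc (r : Q → Q → Prop) (φ : L → ℕ) (T T' : RTree Q L) {P P' : PT Q}
    (hE : PT.Emb r P P') : ∀ (v : Fin T.n) (v' : Fin T'.n), Rep φ T v P → Rep φ T' v' P' →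
      ∃ h, Loc r φ T T' v v' h := by
  induction hE with
  | deep P l' q' k' c' i hl hc ih =>
    intro v v' hv hv'
    have hst := hv.stem
    cases hv' with
    | mk _ _ e he hch hsurj _ hc' =>
      obtain ⟨h, H⟩ := ih v (e i) hv (hc' i)
      refine ⟨h, { H with top := ?_ }⟩
      obtain ⟨K, hK, hK'⟩ := H.top
      have hv' : T'.parent^[K + 1] (h v) = v' := by
        rw [Function.iterate_succ_apply', hK, (hch i).2]
      refine ⟨K + 1, hv', fun k hk => ?_⟩
      rcases Nat.lt_or_ge K k with h1 | h1
      · obtain rfl : k = K + 1 := by omega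
        rw [hv', ← hst]
        exact hl
      · exact hK' k h1
  | same l q q' k k' c c' f hf hq hc ih =>
    intro v v' hv hv'
    generalize hP : PT.node l q k c = P at hv
    cases hv with
    | mk _ k1 e he hch hsurj c1 hcv =>
    cases hP
    generalize hP' : PT.node (φ (T.elbl v)) q' k' c' = P' at hv'
    cases hv' with
    | mk _ k2 e' he' hch' hsurj' c2 hcv' =>
    injection hP' with hl hq' hk hcc
    subst hk
    subst hq'
    cases hcc
    choose g hg using fun i => ih i (e i) (e' (f i)) (hcv i) (hcv' (f i))
    classical
    have hdesc : ∀ x, T.anc x v → x ≠ v → ∃ i, T.anc x (e i) := by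
      intro x hx hne
      obtain ⟨w, hw, hxw⟩ := exists_child hx hne
      obtain ⟨i, rfl⟩ := hsurj w hw
      exact ⟨i, hxw⟩
    have huniq : ∀ x i j, T.anc x (e i) → T.anc x (e j) → i = j := fun x i j hi hj =>
      he ((hch i).unique (hch j) hi hj)
    have hnev : ∀ x i, T.anc x (e i) → x ≠ v := by
      rintro x i hx rfl
      exact (hch i).not_anc hx
    have hbel : ∀ x i, T.anc x (e i) → T.anc x v := fun x i hx => T.anc_trans hx (hch i).anc
    let h : Fin T.n → Fin T'.n := fun x =>
      if hx : ∃ i, T.anc x (e i) then g hx.choose x else v'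
    have hhv : h v = v' := dif_neg (fun ⟨i, hi⟩ => hnev v i hi rfl)
    have hhx : ∀ x i, T.anc x (e i) → h x = g i x := by
      intro x i hx
      have hex : ∃ i, T.anc x (e i) := ⟨i, hx⟩
      have h1 : h x = g hex.choose x := dif_pos hex
      rw [h1, huniq x _ _ hex.choose_spec hx]
    refine ⟨h, ⟨?_, ?_, ?_, ?_, ?_⟩⟩
    · refine ⟨0, hhv, fun k hk => ?_⟩
      obtain rfl : k = 0 := by omega
      rw [Function.iterate_zero, id, hhv]
      exact hl.le
    · rw [hhv]
      exact hl.symm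
    · intro x hx
      by_cases hxv : x = v
      · rw [hxv, hhv]
        exact hq
      · obtain ⟨i, hi⟩ := hdesc x hx hxv
        rw [hhx x i hi]
        exact (hg i).lbl x hi
    · intro x hx hxv
      obtain ⟨i, hi⟩ := hdesc x hx hxv
      rw [hhx x i hi]
      by_cases hxe : x = e i
      · subst hxe
        obtain ⟨K, hK, hK'⟩ := (hg i).top
        refine ⟨K + 1, Nat.succ_pos _, ?_, fun k hk => hK' k (by omega), (hg i).top_eq⟩
        rw [Function.iterate_succ_apply', hK, (hch' _).2, (hch i).2, hhv]
      · rw [hhx _ i (T.anc_of_ne hi hxe)]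
        exact (hg i).gap x hi hxe
    · intro x y hx hy
      by_cases hyv : y = v
      · subst hyv
        refine iff_of_true ?_ hx
        rw [hhv]
        by_cases hxv : x = y
        · rw [hxv, hhv]
          exact T'.anc_refl _
        · obtain ⟨i, hi⟩ := hdesc x hx hxv
          rw [hhx x i hi]
          exact T'.anc_trans ((hg i).below hi) (hch' _).anc
      · obtain ⟨j, hj⟩ := hdesc y hy hyv
        by_cases hxv : x = v
        · subst hxv
          refine iff_of_false ?_ ?_
          · rw [hhv, hhx y j hj]
            intro h1
            exact (hch' _).not_anc (T'.anc_trans h1 ((hg j).below hj))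
          · intro h1
            exact hyv (T.anc_antisymm hy h1)
        · obtain ⟨i, hi⟩ := hdesc x hx hxv
          rw [hhx x i hi, hhx y j hj]
          by_cases hij : i = j
          · subst hij
            exact (hg i).anc x y hi hj
          · refine iff_of_false ?_ ?_
            · intro h1
              exact hij (hf (he' ((hch' _).unique (hch' _) ((hg i).below hi)
                (T'.anc_trans h1 ((hg j).below hj)))))
            · intro h1
              exact hij (huniq x i j hi (T.anc_trans h1 hj))

end RTree

/-- Dershowitz–Tzameret: for a well-quasi-ordered set `(Q, leQ)` of vertex labels and a
finite totally ordered set `L` of edge labels, finite rooted labelled trees are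
well-quasi-ordered by the gap embedding relation. -/
theorem stmt10 (Q L : Type) (leQ : Q → Q → Prop)
    (hrefl : ∀ q, leQ q q)
    (htrans : ∀ a b c, leQ a b → leQ b c → leQ a c)
    (hwqo : ∀ f : ℕ → Q, ∃ i j, i < j ∧ leQ (f i) (f j))
    [LinearOrder L] [Fintype L]
    (T : ℕ → RTree Q L) :
    ∃ i j, i < j ∧ GapEmbed leQ (· ≤ ·) (T i) (T j) := by
  let φ : L → ℕ := fun l => ((Fintype.orderIsoFinOfCardEq L rfl).symm l).1
  have hφle : ∀ a b, φ a ≤ φ b → a ≤ b := fun a b h =>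
    (Fintype.orderIsoFinOfCardEq L rfl).symm.le_iff_le.1 h
  have hφN : ∀ l, φ l < Fintype.card L := fun l => Fin.is_lt _
  choose P hP hG using fun i => RTree.exists_rep φ _ hφN (T i) (T i).root
  have hpwo := PT.gen_pwo hrefl htrans hwqo (Fintype.card L) (Fintype.card L) 0 (by simp) ∅
    (Set.partiallyWellOrderedOn_empty _)
  obtain ⟨i, j, hij, hE⟩ := hpwo.exists_lt hG
  obtain ⟨h, H⟩ := RTree.exists_loc leQ φ (T i) (T j) hE _ _ (hP i) (hP j)
  have hroot : ∀ x, (T i).anc x (T i).root := (T i).reach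
  refine ⟨i, j, hij, h, ?_, fun x y => H.anc x y (hroot x) (hroot y),
    fun x => H.lbl x (hroot x), ?_⟩
  · intro x y hxy
    apply (T i).anc_antisymm
    · rw [← H.anc x y (hroot x) (hroot y), hxy]
      exact (T j).anc_refl _
    · rw [← H.anc y x (hroot y) (hroot x), hxy]
      exact (T j).anc_refl _
  · intro x hx
    obtain ⟨K, hK0, hK, hlab, heq⟩ := H.gap x (hroot x) hx
    classical
    have hex : ∃ K, 0 < K ∧ (T j).parent^[K] (h x) = h ((T i).parent x) := ⟨K, hK0, hK⟩
    have hle : Nat.find hex ≤ K := Nat.find_min' hex ⟨hK0, hK⟩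
    refine ⟨Nat.find hex, (Nat.find_spec hex).1, (Nat.find_spec hex).2, ?_, ?_, ?_⟩
    · intro k hk0 hk hc
      exact Nat.find_min hex hk ⟨hk0, hc⟩
    · intro k hk
      exact hφle _ _ (hlab k (by omega))
    · exact le_antisymm (hφle _ _ heq.le) (hφle _ _ heq.ge)
end
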